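/- Assume Hypothesis (H) and let ε₀ := 1/(2 C_R ‖M‖). Then for every ε ∈ (0, ε₀), the operator B_ε := M + ε⁻¹ A (with domain dom(A)) is boundedly invertible, the operator B_{ε,R} := ι_R* M ι_R + ε⁻¹ ι_R* A ι_R (with domain dom(A) ∩ R) is boundedly invertible, and the identity π_R B_ε⁻¹ = ι_R B_{ε,R}⁻¹ ( ι_R* − ι_R* M π_N B_ε⁻¹ ) holds as an identity of bounded operators from H to H. -/

import Mathlib

/-!
Since `ε⁻¹ A` is again skew-selfadjoint, absorb `ε⁻¹` into `A`. Skew-selfadjointness gives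
`re ⟪A x, x⟫ = 0`, so `M + A` inherits the lower bound of the coercive operator `M`; it is closed,
and its range is dense because a vector orthogonal to the range lies in `dom A† = dom A`, where it
can be tested against itself. Hence `M + A` is boundedly invertible. A subspace `R` that reduces `A`
compresses `A` to a skew-selfadjoint operator on `R` and `M` to a coercive one, so the same argument
inverts the compression of `M + A`. The identity between the two inverses is the equation
`(M + A) x = y` projected to `R`.
-/

open scoped InnerProductSpace

section BoundedInverse

variable {𝕜 E F : Type*} [NontriviallyNormedField 𝕜]
  [NormedAddCommGroup E] [NormedSpace 𝕜 E] [NormedAddCommGroup F] [NormedSpace 𝕜 F]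

/-- The everywhere defined bounded operator `S` is a two-sided inverse of the partially defined
operator `T`: `S` is a left inverse on the domain of `T`, and `T` is onto. -/
structure IsBoundedInverse (T : E →ₗ.[𝕜] F) (S : F →L[𝕜] E) : Prop where
  apply_apply (x : T.domain) : S (T x) = x
  surjective (y : F) : ∃ x : T.domain, T x = y

theorem isClosed_vadd {T : E →ₗ.[𝕜] F} (hT : T.IsClosed) (M : E →L[𝕜] F) :
    ((M : E →ₗ[𝕜] F) +ᵥ T).IsClosed := by
  have graph_eq : (((M : E →ₗ[𝕜] F) +ᵥ T).graph : Set (E × F)) =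
      (fun p ↦ (p.1, p.2 - M p.1)) ⁻¹' T.graph := by
    ext ⟨x, y⟩
    simp only [SetLike.mem_coe, Set.mem_preimage, LinearPMap.mem_graph_iff]
    refine exists_congr fun z ↦ and_congr_right fun hz ↦ ?_
    rw [← hz, LinearPMap.vadd_apply, ContinuousLinearMap.coe_coe, eq_sub_iff_add_eq']
  rw [LinearPMap.IsClosed, graph_eq]
  exact IsClosed.preimage (by fun_prop) hT

theorem antilipschitzWith_graph_snd {T : E →ₗ.[𝕜] F} {C : NNReal}
    (hC : ∀ x : T.domain, ‖(x : E)‖ ≤ C * ‖T x‖) :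
    AntilipschitzWith (max C 1) (ContinuousLinearMap.snd 𝕜 E F ∘L T.graph.subtypeL) := by
  refine ContinuousLinearMap.antilipschitz_of_bound _ ?_
  rintro ⟨⟨u, v⟩, huv⟩
  obtain ⟨x, rfl, rfl⟩ := (LinearPMap.mem_graph_iff T).1 huv
  change max ‖(x : E)‖ ‖T x‖ ≤ max (C : ℝ) 1 * ‖T x‖
  rw [max_mul_of_nonneg _ _ (norm_nonneg _), one_mul]
  exact max_le_max_right _ (hC x)

theorem exists_isBoundedInverse_of_isClosed [CompleteSpace E] [CompleteSpace F]
    {T : E →ₗ.[𝕜] F} (hT : T.IsClosed) {C : NNReal}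
    (hC : ∀ x : T.domain, ‖(x : E)‖ ≤ C * ‖T x‖) (hdense : DenseRange T) :
    ∃ S, IsBoundedInverse T S := by
  have : CompleteSpace T.graph := _root_.IsClosed.completeSpace_coe (hs := hT)
  let f : T.graph →L[𝕜] F := ContinuousLinearMap.snd 𝕜 E F ∘L T.graph.subtypeL
  have f_denseRange : DenseRange f :=
    hdense.mono (Set.range_subset_iff.2 fun x : T.domain ↦ ⟨⟨(x, T x), T.mem_graph x⟩, rfl⟩)
  have f_bijective : Function.Bijective f :=
    f.bijective_iff_dense_range_and_antilipschitz.2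
      ⟨Submodule.dense_iff_topologicalClosure_eq_top.1 f_denseRange, _,
        antilipschitzWith_graph_snd hC⟩
  let e : T.graph ≃L[𝕜] F := .ofBijective f (LinearMap.ker_eq_bot.2 f_bijective.1)
    (LinearMap.range_eq_top.2 f_bijective.2)
  refine ⟨ContinuousLinearMap.fst 𝕜 E F ∘L T.graph.subtypeL ∘L e.symm, fun x ↦ ?_, fun y ↦ ?_⟩
  · exact congrArg (fun p : T.graph ↦ p.1.1) (e.symm_apply_apply ⟨(x, T x), T.mem_graph x⟩)
  · obtain ⟨p, rfl⟩ := f_bijective.2 y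
    obtain ⟨x, -, hx⟩ := (LinearPMap.mem_graph_iff T).1 p.2
    exact ⟨x, hx⟩

end BoundedInverse

section HilbertSpace

variable {𝕜 H : Type*} [RCLike 𝕜] [NormedAddCommGroup H] [InnerProductSpace 𝕜 H]

section SkewSelfAdjoint

variable [CompleteSpace H]

/-- A densely defined operator `A` with `A† = -A`. Density is part of the definition because
`LinearPMap.adjoint` takes a junk value on operators that are not densely defined. -/
structure IsSkewSelfAdjoint (A : H →ₗ.[𝕜] H) : Prop where
  dense_domain : Dense (A.domain : Set H)
  adjoint_eq : A.adjoint = -A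

namespace IsSkewSelfAdjoint

variable {A : H →ₗ.[𝕜] H}

theorem of_isFormalAdjoint (hdense : Dense (A.domain : Set H)) (hformal : A.IsFormalAdjoint (-A))
    (hdomain : A.adjoint.domain ≤ A.domain) : IsSkewSelfAdjoint A where
  dense_domain := hdense
  adjoint_eq := (LinearPMap.eq_of_le_of_domain_eq (hformal.le_adjoint hdense)
    (le_antisymm (hformal.le_adjoint hdense).1 hdomain)).symm

theorem isFormalAdjoint (hA : IsSkewSelfAdjoint A) : A.IsFormalAdjoint (-A) :=
  hA.adjoint_eq ▸ (LinearPMap.adjoint_isFormalAdjoint hA.dense_domain).symm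

theorem mem_domain_of_exists (hA : IsSkewSelfAdjoint A) {y : H}
    (hy : ∃ w : H, ∀ x : A.domain, ⟪w, x⟫_𝕜 = ⟪y, A x⟫_𝕜) : y ∈ A.domain := by
  simpa only [hA.adjoint_eq, LinearPMap.neg_domain] using
    LinearPMap.mem_adjoint_domain_of_exists y hy

theorem re_inner_apply_self (hA : IsSkewSelfAdjoint A) (x : A.domain) :
    RCLike.re ⟪A x, x⟫_𝕜 = 0 := by
  have h : RCLike.re ⟪A x, x⟫_𝕜 = -RCLike.re ⟪A x, x⟫_𝕜 := by
    conv_lhs => rw [hA.isFormalAdjoint x x, LinearPMap.neg_apply, inner_neg_right, map_neg,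
      inner_re_symm]
  linarith

theorem isClosed (hA : IsSkewSelfAdjoint A) : A.IsClosed := by
  have graph_eq : (A.graph : Set (H × H)) = (fun p ↦ (p.1, -p.2)) ⁻¹' A.adjoint.graph := by
    ext ⟨x, y⟩
    rw [hA.adjoint_eq]
    simp only [SetLike.mem_coe, Set.mem_preimage, LinearPMap.mem_graph_iff, LinearPMap.neg_apply,
      neg_inj]
    rfl
  rw [LinearPMap.IsClosed, graph_eq]
  exact IsClosed.preimage (by fun_prop) (LinearPMap.adjoint_isClosed hA.dense_domain)

theorem real_smul [Module ℝ H] [IsScalarTower ℝ 𝕜 H] (hA : IsSkewSelfAdjoint A) {r : ℝ}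
    (hr : r ≠ 0) : IsSkewSelfAdjoint (r • A) := by
  refine of_isFormalAdjoint hA.dense_domain (fun x y ↦ ?_) fun y hy ↦ ?_
  · have h := hA.isFormalAdjoint x y
    rw [LinearPMap.neg_apply, LinearPMap.smul_apply, LinearPMap.smul_apply, ← smul_neg,
      inner_smul_left_eq_smul, inner_smul_right_eq_smul]
    exact congrArg (r • ·) h
  · refine hA.mem_domain_of_exists ⟨r⁻¹ • (r • A).adjoint ⟨y, hy⟩, fun x ↦ ?_⟩
    have h := LinearPMap.adjoint_isFormalAdjoint (T := r • A) hA.dense_domain ⟨y, hy⟩ x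
    rw [LinearPMap.smul_apply, inner_smul_right_eq_smul] at h
    rw [inner_smul_left_eq_smul, h, inv_smul_smul₀ hr]

variable {M : H →L[𝕜] H} {c : ℝ}

theorem mul_norm_le_norm_vadd_apply (hA : IsSkewSelfAdjoint A)
    (hM : ∀ x, c * ‖x‖ ^ 2 ≤ RCLike.re ⟪M x, x⟫_𝕜) (x : A.domain) :
    c * ‖(x : H)‖ ≤ ‖M x + A x‖ := by
  rcases (norm_nonneg (x : H)).eq_or_lt with hx | hx
  · simp [← hx]
  refine le_of_mul_le_mul_right ?_ hx
  calc c * ‖(x : H)‖ * ‖(x : H)‖ = c * ‖(x : H)‖ ^ 2 := by ring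
    _ ≤ RCLike.re ⟪M x, x⟫_𝕜 := hM x
    _ = RCLike.re ⟪M x + A x, x⟫_𝕜 := by
      rw [inner_add_left, map_add, hA.re_inner_apply_self, add_zero]
    _ ≤ ‖M x + A x‖ * ‖(x : H)‖ := re_inner_le_norm _ _

theorem eq_zero_of_forall_inner_vadd_eq_zero (hA : IsSkewSelfAdjoint A) (hc : 0 < c)
    (hM : ∀ x, c * ‖x‖ ^ 2 ≤ RCLike.re ⟪M x, x⟫_𝕜) {y : H}
    (hy : ∀ x : A.domain, ⟪y, M x + A x⟫_𝕜 = 0) : y = 0 := by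
  have y_mem : y ∈ A.domain := hA.mem_domain_of_exists ⟨-M.adjoint y, fun x ↦ by
    rw [inner_neg_left, ContinuousLinearMap.adjoint_inner_left, neg_eq_iff_add_eq_zero,
      ← inner_add_right, hy]⟩
  have re_inner_eq_zero : RCLike.re ⟪M y, y⟫_𝕜 = 0 := by
    have h := congrArg RCLike.re (hy ⟨y, y_mem⟩)
    rwa [inner_re_symm, inner_add_left, map_add, hA.re_inner_apply_self ⟨y, y_mem⟩, add_zero,
      map_zero] at h
  have norm_sq_le : ‖y‖ ^ 2 ≤ 0 := by
    have h := hM y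
    rw [re_inner_eq_zero] at h
    exact nonpos_of_mul_nonpos_right h hc
  simpa using norm_sq_le

theorem exists_isBoundedInverse_vadd (hA : IsSkewSelfAdjoint A) (hc : 0 < c)
    (hM : ∀ x, c * ‖x‖ ^ 2 ≤ RCLike.re ⟪M x, x⟫_𝕜) :
    ∃ S, IsBoundedInverse ((M : H →ₗ[𝕜] H) +ᵥ A) S := by
  refine exists_isBoundedInverse_of_isClosed (C := ⟨c⁻¹, by positivity⟩)
    (isClosed_vadd hA.isClosed M) (fun x ↦ ?_) ?_
  · exact (le_inv_mul_iff₀ hc).2 (hA.mul_norm_le_norm_vadd_apply hM x)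
  · refine Submodule.dense_iff_topologicalClosure_eq_top (s := ((M : H →ₗ[𝕜] H) +ᵥ A).toFun.range).2
      (Submodule.topologicalClosure_eq_top_iff.2 ((Submodule.eq_bot_iff _).2 fun y hy ↦ ?_))
    exact hA.eq_zero_of_forall_inner_vadd_eq_zero hc hM fun x ↦
      (Submodule.mem_orthogonal' _ _).1 hy _ ⟨x, rfl⟩

end IsSkewSelfAdjoint

end SkewSelfAdjoint

section Compression

/-- The closed subspace `K` reduces the operator `A`: the orthogonal projection `π` onto `K`
satisfies `π A ⊆ A π`. -/
def Reduces (K : Submodule 𝕜 H) [K.HasOrthogonalProjection] (A : H →ₗ.[𝕜] H) : Prop :=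
  ∀ x : A.domain, ∃ hx : (K.orthogonalProjectionOnto (x : H) : H) ∈ A.domain,
    (K.orthogonalProjectionOnto (A x) : H) = A ⟨K.orthogonalProjectionOnto (x : H), hx⟩

/-- The compression `ι* A ι` of the operator `A` to the closed subspace `K`, where `ι` is the
inclusion of `K`; its domain is `dom A ∩ K`, viewed as a subspace of `K`. -/
noncomputable def compression (K : Submodule 𝕜 H) [K.HasOrthogonalProjection]
    (A : H →ₗ.[𝕜] H) : K →ₗ.[𝕜] K where
  domain := A.domain.comap K.subtype
  toFun := K.orthogonalProjectionOnto ∘ₗ A.toFun ∘ₗ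
    K.subtype.restrict (p := A.domain.comap K.subtype) (q := A.domain) fun _ ↦ id

variable {K : Submodule 𝕜 H} {A : H →ₗ.[𝕜] H}

section

variable [K.HasOrthogonalProjection]

theorem compression_apply (x : (compression K A).domain) :
    compression K A x = K.orthogonalProjectionOnto (A ⟨x, x.2⟩) :=
  rfl

theorem compression_vadd (M : H →L[𝕜] H) :
    compression K ((M : H →ₗ[𝕜] H) +ᵥ A) =
      ((K.orthogonalProjectionOnto ∘L M ∘L K.subtypeL : K →L[𝕜] K) : K →ₗ[𝕜] K) +ᵥ
        compression K A :=
  LinearPMap.ext' <| LinearMap.ext fun _ ↦ map_add K.orthogonalProjectionOnto _ _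

theorem Reduces.real_smul [Module ℝ H] [IsScalarTower ℝ 𝕜 H] (hK : Reduces K A) (r : ℝ) :
    Reduces K (r • A) := fun x ↦
  (hK x).imp fun _ hx ↦ by
    rw [LinearPMap.smul_apply, ContinuousLinearMap.map_smul_of_tower]
    exact congrArg (r • ·) hx

theorem Reduces.dense_domain_compression (hK : Reduces K A) (hA : Dense (A.domain : Set H)) :
    Dense ((compression K A).domain : Set K) := by
  have projection_surjective : Function.Surjective K.orthogonalProjectionOnto := fun y ↦
    ⟨y, K.orthogonalProjectionOnto_mem_subspace_eq_self y⟩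
  refine (projection_surjective.denseRange.dense_image (by fun_prop) hA).mono ?_
  rintro _ ⟨x, hx, rfl⟩
  exact (hK ⟨x, hx⟩).1

theorem le_re_inner_compression {M : H →L[𝕜] H} {c : ℝ}
    (hM : ∀ x, c * ‖x‖ ^ 2 ≤ RCLike.re ⟪M x, x⟫_𝕜) (x : K) :
    c * ‖x‖ ^ 2 ≤ RCLike.re ⟪(K.orthogonalProjectionOnto ∘L M ∘L K.subtypeL) x, x⟫_𝕜 := by
  simpa using hM x

end

theorem Reduces.isSkewSelfAdjoint_compression [CompleteSpace H] [CompleteSpace K]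
    (hK : Reduces K A) (hA : IsSkewSelfAdjoint A) : IsSkewSelfAdjoint (compression K A) := by
  have hdense := hK.dense_domain_compression hA.dense_domain
  refine .of_isFormalAdjoint hdense (fun x y ↦ ?_) fun y hy ↦ ?_
  · rw [LinearPMap.neg_apply, compression_apply, compression_apply, ← map_neg,
      Submodule.inner_orthogonalProjectionOnto_eq_of_mem_right,
      Submodule.inner_orthogonalProjectionOnto_eq_of_mem_left]
    exact hA.isFormalAdjoint ⟨x, x.2⟩ ⟨y, y.2⟩
  · refine hA.mem_domain_of_exists ⟨(compression K A).adjoint ⟨y, hy⟩, fun x ↦ ?_⟩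
    obtain ⟨hx, hAx⟩ := hK x
    calc ⟪((compression K A).adjoint ⟨y, hy⟩ : H), x⟫_𝕜
        = ⟪(compression K A).adjoint ⟨y, hy⟩, K.orthogonalProjectionOnto (x : H)⟫_𝕜 :=
          (K.inner_orthogonalProjectionOnto_eq_of_mem_left _ _).symm
      _ = ⟪y, K.orthogonalProjectionOnto (A ⟨K.orthogonalProjectionOnto (x : H), hx⟩)⟫_𝕜 :=
          LinearPMap.adjoint_isFormalAdjoint hdense ⟨y, hy⟩ ⟨_, hx⟩
      _ = ⟪(y : H), A x⟫_𝕜 := by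
          rw [← hAx, K.orthogonalProjectionOnto_mem_subspace_eq_self,
            K.inner_orthogonalProjectionOnto_eq_of_mem_left]

variable {N : Submodule 𝕜 H} [N.HasOrthogonalProjection]

theorem Reduces.orthogonalProjectionOnto_inverse_apply (hN : Reduces Nᗮ A) {M : H →L[𝕜] H}
    {S : H →L[𝕜] H} {S_R : Nᗮ →L[𝕜] Nᗮ} (hS : IsBoundedInverse ((M : H →ₗ[𝕜] H) +ᵥ A) S)
    (hS_R : IsBoundedInverse (compression Nᗮ ((M : H →ₗ[𝕜] H) +ᵥ A)) S_R) (y : H) :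
    Nᗮ.orthogonalProjectionOnto (S y) = S_R (Nᗮ.orthogonalProjectionOnto y -
      Nᗮ.orthogonalProjectionOnto (M (N.orthogonalProjectionOnto (S y)))) := by
  obtain ⟨x, rfl⟩ := hS.surjective y
  rw [hS.apply_apply]
  obtain ⟨hx, hAx⟩ := hN x
  have projected_equation :
      compression Nᗮ ((M : H →ₗ[𝕜] H) +ᵥ A) ⟨Nᗮ.orthogonalProjectionOnto (x : H), hx⟩ =
        Nᗮ.orthogonalProjectionOnto (M x + A x) -
          Nᗮ.orthogonalProjectionOnto (M (N.orthogonalProjectionOnto (x : H))) := by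
    have split_x : M (Nᗮ.orthogonalProjectionOnto (x : H)) =
        M x - M (N.orthogonalProjectionOnto (x : H)) := by
      rw [← map_sub, ← N.starProjection_apply, ← Nᗮ.starProjection_apply,
        N.starProjection_orthogonal_val]
    calc compression Nᗮ ((M : H →ₗ[𝕜] H) +ᵥ A) ⟨Nᗮ.orthogonalProjectionOnto (x : H), hx⟩
        = Nᗮ.orthogonalProjectionOnto (M (Nᗮ.orthogonalProjectionOnto (x : H)) +
            A ⟨Nᗮ.orthogonalProjectionOnto (x : H), hx⟩) := rfl
      _ = Nᗮ.orthogonalProjectionOnto (M x + A x) -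
            Nᗮ.orthogonalProjectionOnto (M (N.orthogonalProjectionOnto (x : H))) := by
          rw [← hAx, map_add, Nᗮ.orthogonalProjectionOnto_mem_subspace_eq_self, split_x, map_sub,
            map_add, sub_add_eq_add_sub]
  exact (hS_R.apply_apply ⟨_, hx⟩).symm.trans (congrArg S_R projected_equation)

end Compression

theorem statement6_general [CompleteSpace H] [Module ℝ H] [IsScalarTower ℝ 𝕜 H]
    (M : H →L[𝕜] H) {c : ℝ} (hc : 0 < c) (hM : ∀ x, c * ‖x‖ ^ 2 ≤ RCLike.re ⟪M x, x⟫_𝕜)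
    {A : H →ₗ.[𝕜] H} (hA : IsSkewSelfAdjoint A)
    {N : Submodule 𝕜 H} [N.HasOrthogonalProjection] (hN : Reduces Nᗮ A) {ε : ℝ} (hε : ε ≠ 0) :
    ∃ (S : H →L[𝕜] H) (S_R : Nᗮ →L[𝕜] Nᗮ),
      IsBoundedInverse ((M : H →ₗ[𝕜] H) +ᵥ ε⁻¹ • A) S ∧
      IsBoundedInverse (compression Nᗮ ((M : H →ₗ[𝕜] H) +ᵥ ε⁻¹ • A)) S_R ∧
      ∀ y, Nᗮ.orthogonalProjectionOnto (S y) = S_R (Nᗮ.orthogonalProjectionOnto y -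
        Nᗮ.orthogonalProjectionOnto (M (N.orthogonalProjectionOnto (S y)))) := by
  have hA_smul := hA.real_smul (inv_ne_zero hε)
  have hN_smul := hN.real_smul ε⁻¹
  obtain ⟨S, hS⟩ := hA_smul.exists_isBoundedInverse_vadd hc hM
  have hA_compression := hN_smul.isSkewSelfAdjoint_compression hA_smul
  obtain ⟨S_R, hS_R⟩ :=
    hA_compression.exists_isBoundedInverse_vadd hc (le_re_inner_compression hM)
  rw [← compression_vadd] at hS_R
  exact ⟨S, S_R, hS, hS_R, hN_smul.orthogonalProjectionOnto_inverse_apply hS hS_R⟩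

end HilbertSpace

/-- Under Hypothesis (H), for every `ε ∈ (0, 1/(2 C_R ‖M‖))` both
`B_ε = M + ε⁻¹ A` (domain `dom A`) and `B_{ε,R} = ι_R* M ι_R + ε⁻¹ ι_R* A ι_R`
(domain `dom(A) ∩ R`) are boundedly invertible, and
`π_R B_ε⁻¹ = ι_R B_{ε,R}⁻¹ (ι_R* − ι_R* M π_N B_ε⁻¹)`. -/
theorem statement6
    {H : Type*} [NormedAddCommGroup H] [InnerProductSpace ℂ H] [CompleteSpace H]
    -- `M` is a bounded operator with `Re⟪M x, x⟫ ≥ c ‖x‖²`, `c > 0`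
    (M : H →L[ℂ] H) (c : ℝ) (hc : 0 < c)
    (hM : ∀ x : H, c * ‖x‖ ^ 2 ≤ (inner ℂ (M x) x : ℂ).re)
    -- `A` is densely defined and skew-selfadjoint
    (A : H →ₗ.[ℂ] H) (hA_dense : Dense (A.domain : Set H)) (hA_skew : A.adjoint = -A)
    -- `N` is a closed subspace, `R = Nᗮ`
    (N : Submodule ℂ H) [CompleteSpace N]
    (C_R : ℝ) (hC_R : 0 < C_R)
    -- Hypothesis (H)(a): `N ⊆ dom A` and `A π_N` is bounded
    (hHa_sub : N ≤ A.domain)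
    (hHa_bdd : ∃ Ca : ℝ, ∀ x : A.domain, (x : H) ∈ N → ‖A x‖ ≤ Ca * ‖(x : H)‖)
    -- Hypothesis (H)(b): `π_R A ⊆ A π_R`
    (hHb : ∀ x : A.domain,
      ∃ hx : ((Submodule.orthogonalProjectionOnto Nᗮ (x : H) : H)) ∈ A.domain,
        (Submodule.orthogonalProjectionOnto Nᗮ (A x) : H)
          = A ⟨(Submodule.orthogonalProjectionOnto Nᗮ (x : H) : H), hx⟩)
    -- Hypothesis (H)(c): the compression `ι_R* A ι_R`, with domain `dom(A) ∩ R`, is a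
    -- bijection onto `R` with bounded inverse of norm at most `C_R`
    (hHc : ∃ J : Nᗮ →L[ℂ] Nᗮ, ‖J‖ ≤ C_R ∧
      (∀ (x : A.domain) (hx : (x : H) ∈ Nᗮ),
        J (Submodule.orthogonalProjectionOnto Nᗮ (A x)) = ⟨(x : H), hx⟩) ∧
      (∀ y : Nᗮ, ∃ (x : A.domain) (hx : (x : H) ∈ Nᗮ),
        Submodule.orthogonalProjectionOnto Nᗮ (A x) = y))
    (ε : ℝ) (hε : ε ∈ Set.Ioo (0 : ℝ) (1 / (2 * C_R * ‖M‖))) :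
    ∃ (Binv : H →L[ℂ] H) (JR : Nᗮ →L[ℂ] Nᗮ),
      -- `Binv` is the bounded inverse of `B_ε = M + ε⁻¹ A`
      (∀ x : A.domain, Binv (M (x : H) + ε⁻¹ • A x) = x) ∧
      (∀ y : H, ∃ x : A.domain, M (x : H) + ε⁻¹ • A x = y) ∧
      -- `JR` is the bounded inverse of `B_{ε,R}` (domain `dom(A) ∩ R`)
      (∀ (x : A.domain) (hx : (x : H) ∈ Nᗮ),
        JR (Submodule.orthogonalProjectionOnto Nᗮ (M (x : H)) + ε⁻¹ • Submodule.orthogonalProjectionOnto Nᗮ (A x))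
          = ⟨(x : H), hx⟩) ∧
      (∀ y : Nᗮ, ∃ (x : A.domain) (hx : (x : H) ∈ Nᗮ),
        Submodule.orthogonalProjectionOnto Nᗮ (M (x : H)) + ε⁻¹ • Submodule.orthogonalProjectionOnto Nᗮ (A x) = y) ∧
      -- the identity `π_R B_ε⁻¹ = ι_R B_{ε,R}⁻¹ (ι_R* − ι_R* M π_N B_ε⁻¹)`
      (∀ y : H, (Submodule.orthogonalProjectionOnto Nᗮ (Binv y) : H)
          = (JR (Submodule.orthogonalProjectionOnto Nᗮ y
              - Submodule.orthogonalProjectionOnto Nᗮ (M ((Submodule.orthogonalProjectionOnto N (Binv y) : H)))) : H)) := by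
  obtain ⟨S, S_R, hS, hS_R, identity⟩ :=
    statement6_general M hc hM ⟨hA_dense, hA_skew⟩ hHb hε.1.ne'
  simp only [← ContinuousLinearMap.map_smul_of_tower, ← map_add]
  exact ⟨S, S_R, hS.apply_apply, hS.surjective, fun x hx ↦ hS_R.apply_apply ⟨⟨x, hx⟩, x.2⟩,
    fun y ↦ (hS_R.surjective y).elim fun x hx ↦ ⟨⟨x, x.2⟩, x.1.2, hx⟩,
    fun y ↦ congrArg Subtype.val (identity y)⟩
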